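/- arXiv:math/0406441 — 3 statements merged into one kernel-verified Lean document; each statement's English description precedes it below -/
import Mathlib

section
/- Let μ be an infinite cardinal. There is no μ-mad family of cardinality exactly cf(μ); that is, cf(μ) ∉ MAD(μ). -/
/-!
Well-order the family in type `cf μ` as `A i`, `i < cf μ`. A union of fewer than `cf μ` sets of size
`< μ` has size `< μ`, so removing all earlier members from `A i` still leaves a set of size `μ`.
Write `μ = ∑ κ i` with all `κ i < μ`, and choose `C i` of size `κ i` inside what is left of `A i`.
The `C i` are pairwise disjoint, so `C = ⋃ i, C i` has size `μ`, while `C ∩ A j` is covered by the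
fewer than `cf μ` sets `C i` with `i ≤ j`. Hence `C` is almost disjoint from every member of the
family, which is therefore not maximal.
-/

universe u
open Cardinal

/-- A family `𝒜` of subsets of `α` is `μ`-almost disjoint: its union has size `μ`,
each member has size `μ`, and distinct members intersect in a set of size `< μ`. -/
def IsADFamily (μ : Cardinal.{u}) {α : Type u} (𝒜 : Set (Set α)) : Prop :=
  #(⋃₀ 𝒜) = μ ∧ (∀ A ∈ 𝒜, #A = μ) ∧
    ∀ A ∈ 𝒜, ∀ B ∈ 𝒜, A ≠ B → #(↥(A ∩ B)) < μ

/-- `𝒜` is maximal `μ`-almost disjoint: it is `μ`-ad and no new set `C ⊆ ⋃₀ 𝒜`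
can be added keeping the family `μ`-almost disjoint. -/
def IsMadFamily (μ : Cardinal.{u}) {α : Type u} (𝒜 : Set (Set α)) : Prop :=
  IsADFamily μ 𝒜 ∧ ¬∃ C, C ⊆ ⋃₀ 𝒜 ∧ C ∉ 𝒜 ∧ IsADFamily μ (insert C 𝒜)

/-- `MADSet μ` is the set of cardinalities of nontrivial `μ`-mad families,
i.e. `μ`-mad families with at least `cf μ` members. -/
def MADSet (μ : Cardinal.{u}) : Set Cardinal.{u} :=
  {c | ∃ 𝒜 : Set (Set μ.out), IsMadFamily μ 𝒜 ∧ μ.ord.cof ≤ #𝒜 ∧ #𝒜 = c}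

section LinearOrder

variable {ι : Type*} {α : Type*} [LinearOrder ι] {A C : ι → Set α}

theorem pairwise_disjoint_of_subset_sdiff_iUnion_Iio
    (hC : ∀ i, C i ⊆ A i \ ⋃ j : Set.Iio i, A j) : Pairwise (Function.onFun Disjoint C) :=
  (pairwise_disjoint_on C).2 fun i _ hij => Set.disjoint_left.2 fun _ hxi hxj =>
    (hC _ hxj).2 (Set.mem_iUnion.2 ⟨⟨i, hij⟩, (hC _ hxi).1⟩)

theorem iUnion_inter_subset_iUnion_Iic
    (hC : ∀ i, C i ⊆ A i \ ⋃ j : Set.Iio i, A j) (j : ι) :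
    (⋃ i, C i) ∩ A j ⊆ ⋃ i : Set.Iic j, C i := by
  rintro x ⟨hx, hxj⟩
  obtain ⟨i, hxi⟩ := Set.mem_iUnion.1 hx
  have hij : i ≤ j := not_lt.1 fun hji => (hC i hxi).2 (Set.mem_iUnion.2 ⟨⟨j, hji⟩, hxj⟩)
  exact Set.mem_iUnion.2 ⟨⟨i, hij⟩, hxi⟩

end LinearOrder

section Cofinality

variable {μ : Cardinal.{u}} {ι α : Type u}

theorem exists_le_sum_of_mk_eq_cof_ord (hμ : ℵ₀ ≤ μ) (hι : #ι = μ.ord.cof) :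
    ∃ κ : ι → Cardinal.{u}, (∀ i, κ i < μ) ∧ μ ≤ sum κ := by
  obtain ⟨S, hS, hScard⟩ := Order.exists_cof_eq μ.ord.ToType
  obtain ⟨e⟩ := Cardinal.eq.1 (hι.trans ((Ordinal.cof_toType _).symm.trans hScard.symm))
  refine ⟨fun i => #(Set.Iic (e i).1), fun i => ?_, ?_⟩
  · simpa only [mk_ord_toType] using mk_Iic_lt (e i).1 (by simp) (by simpa using hμ)
  · have hcover : ⋃ i, Set.Iic (e i).1 = Set.univ := by
      rw [e.surjective.iUnion_comp fun s : S => Set.Iic s.1, Set.iUnion_coe_set,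
        isCofinal_iff_iUnion_Iic_eq_univ.1 hS]
    calc μ = #(⋃ i, Set.Iic (e i).1) := by rw [hcover, mk_univ, mk_ord_toType]
      _ ≤ sum fun i => #(Set.Iic (e i).1) := mk_iUnion_le_sum_mk

theorem mk_iUnion_lt_of_lt_cof_ord (hμ : ℵ₀ ≤ μ) (hι : #ι < μ.ord.cof) {s : ι → Set α}
    (hs : ∀ i, #(s i) < μ) : #(⋃ i, s i) < μ :=
  (mk_iUnion_le s).trans_lt <|
    mul_lt_of_lt hμ (hι.trans_le (Ordinal.cof_ord_le μ)) (iSup_lt_of_lt_cof_ord hι hs)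

theorem le_mk_sdiff_iUnion (hμ : ℵ₀ ≤ μ) (hι : #ι < μ.ord.cof) {A : Set α} {B : ι → Set α}
    (hA : μ ≤ #A) (hAB : ∀ i, #(A ∩ B i : Set α) < μ) : μ ≤ #(A \ ⋃ i, B i : Set α) := by
  have hinter : #(A ∩ ⋃ i, B i : Set α) < μ := by
    rw [Set.inter_iUnion]
    exact mk_iUnion_lt_of_lt_cof_ord hμ hι hAB
  by_contra! hdiff
  refine (hA.trans ?_).not_gt (add_lt_of_lt hμ hdiff hinter)
  simpa only [Set.sdiff_inter_self_eq_sdiff, Set.sdiff_self_inter] using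
    le_mk_sdiff_add_mk A (A ∩ ⋃ i, B i)

theorem exists_subset_iUnion_forall_mk_inter_lt (hμ : ℵ₀ ≤ μ) (hι : #ι = μ.ord.cof)
    {A : ι → Set α} (hA : ∀ i, μ ≤ #(A i)) (hAd : Pairwise fun i j => #(A i ∩ A j : Set α) < μ) :
    ∃ C ⊆ ⋃ i, A i, μ ≤ #C ∧ ∀ j, #(C ∩ A j : Set α) < μ := by
  obtain ⟨κ, hκ, hκsum⟩ := exists_le_sum_of_mk_eq_cof_ord hμ hι
  obtain ⟨_, _, hord⟩ := exists_ord_eq_type_lt ι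
  have hι' : ℵ₀ ≤ #ι := hι ▸
    Ordinal.aleph0_le_cof_iff.2 (Ordinal.one_lt_cof_iff.2 (isSuccLimit_ord hμ))
  have hremaining (i : ι) : κ i ≤ #(A i \ ⋃ j : Set.Iio i, A j : Set α) :=
    (hκ i).le.trans <| le_mk_sdiff_iUnion hμ (hι ▸ mk_Iio_lt i hord) (hA i)
      fun j => hAd (ne_of_gt j.2)
  choose C hCA hC using fun i => le_mk_iff_exists_subset.1 (hremaining i)
  refine ⟨⋃ i, C i, Set.iUnion_mono fun i => (hCA i).trans Set.sdiff_subset, ?_, fun j => ?_⟩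
  · simpa only [mk_iUnion_eq_sum_mk (pairwise_disjoint_of_subset_sdiff_iUnion_Iio hCA), hC]
      using hκsum
  · exact (mk_le_mk_of_subset (iUnion_inter_subset_iUnion_Iic hCA j)).trans_lt <|
      mk_iUnion_lt_of_lt_cof_ord hμ (hι ▸ mk_Iic_lt j hord hι') fun i => (hC i).trans_lt (hκ i)

end Cofinality

section Families

variable {μ : Cardinal.{u}} {α : Type u} {𝒜 : Set (Set α)} {C : Set α}

protected theorem IsADFamily.insert (h𝒜 : IsADFamily μ 𝒜) (hC𝒜 : C ⊆ ⋃₀ 𝒜) (hC : μ ≤ #C)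
    (hCA : ∀ A ∈ 𝒜, #(C ∩ A : Set α) < μ) : IsADFamily μ (insert C 𝒜) := by
  obtain ⟨hunion, hmk, hinter⟩ := h𝒜
  refine ⟨?_, ?_, ?_⟩
  · rwa [Set.sUnion_insert, Set.union_eq_right.2 hC𝒜]
  · rintro A (rfl | hA)
    exacts [((mk_le_mk_of_subset hC𝒜).trans hunion.le).antisymm hC, hmk A hA]
  · rintro A (rfl | hA) B (rfl | hB) hne
    · exact absurd rfl hne
    · exact hCA B hB
    · exact Set.inter_comm A B ▸ hCA A hA
    · exact hinter A hA B hB hne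

theorem IsMadFamily.exists_le_mk_inter (h𝒜 : IsMadFamily μ 𝒜) (hC𝒜 : C ⊆ ⋃₀ 𝒜) (hC : μ ≤ #C) :
    ∃ A ∈ 𝒜, μ ≤ #(C ∩ A : Set α) := by
  by_contra! hCA
  have hCnot : C ∉ 𝒜 := fun hmem => (hCA C hmem).not_ge (by rwa [Set.inter_self])
  exact h𝒜.2 ⟨C, hC𝒜, hCnot, h𝒜.1.insert hC𝒜 hC hCA⟩

end Families

theorem stmt1_general {μ : Cardinal.{u}} (hμ : ℵ₀ ≤ μ) {α : Type u} {𝒜 : Set (Set α)}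
    (h𝒜 : IsMadFamily μ 𝒜) : #𝒜 ≠ μ.ord.cof := by
  intro hcard
  obtain ⟨-, hmk, hinter⟩ := h𝒜.1
  obtain ⟨C, hC𝒜, hC, hCA⟩ := exists_subset_iUnion_forall_mk_inter_lt hμ hcard
    (A := fun A : 𝒜 => A.1) (fun A => (hmk A A.2).ge)
    fun A B hne => hinter A A.2 B B.2 (Subtype.coe_ne_coe.2 hne)
  rw [← Set.sUnion_eq_iUnion] at hC𝒜
  obtain ⟨A, hA, hle⟩ := h𝒜.exists_le_mk_inter hC𝒜 hC
  exact (hCA ⟨A, hA⟩).not_ge hle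

/-- There is no μ-mad family of cardinality exactly cf(μ): cf(μ) ∉ MAD(μ). -/
theorem stmt1 (μ : Cardinal.{u}) (hμ : ℵ₀ ≤ μ) : μ.ord.cof ∉ MADSet μ := by
  rintro ⟨𝒜, h𝒜, -, hcard⟩
  exact stmt1_general hμ h𝒜 hcard
end

section
/- Let μ be a singular cardinal. Then MAD(cf(μ)) ⊆ MAD(μ): every cardinal which is the size of a nontrivial cf(μ)-mad family is also the size of a nontrivial μ-mad family. -/
/-!
Write `κ = cf μ`, and split `μ` into `κ` nonempty pieces of size `< μ` so that, for every `ν < μ`,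
fewer than `κ` of the pieces have size `≤ ν`. Sets of pieces then behave in `μ` as sets of indices
do in `κ`: any `κ` pieces together have size `μ`, fewer than `κ` pieces together have size `< μ`.
So replacing each index by its piece turns a `κ`-almost disjoint family into a `μ`-almost disjoint
one.

For maximality, let `C` have size `μ`. As `κ < μ`, the traces of `C` on the pieces are unbounded in
`μ`, so for each index `i` there is `d i` such that the trace of `C` on the piece `d i` is larger
than the piece `i`. Then the pieces in the range of `d` have unbounded sizes, so the range of `d`
has size `κ` and meets some member `A` of the given `κ`-mad family in `κ` indices. Hence `C` meets
the union of the pieces in `A` in a set of size `μ`.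
-/

universe u
open Cardinal

open Set

section Cardinals

variable {ι α : Type u} {μ ν : Cardinal.{u}}

lemma mk_iUnion_lt_of_forall_le {f : ι → Set α} (hμ : ℵ₀ ≤ μ) (hι : #ι < μ) (hν : ν < μ)
    (hf : ∀ i, #(f i) ≤ ν) : #(⋃ i, f i) < μ :=
  calc #(⋃ i, f i)
    _ ≤ #ι * ⨆ i, #(f i) := mk_iUnion_le f
    _ ≤ #ι * ν := by gcongr; exact ciSup_le' hf
    _ < μ := mul_lt_of_lt hμ hι hν

lemma mk_iUnion_lt_of_lt_cof {f : ι → Set α} (hμ : ℵ₀ ≤ μ) (hι : #ι < μ.ord.cof)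
    (hf : ∀ i, #(f i) < μ) : #(⋃ i, f i) < μ :=
  mk_iUnion_lt_of_forall_le hμ (hι.trans_le (Ordinal.cof_ord_le μ))
    (iSup_lt_of_lt_cof_ord hι hf) (le_ciSup bddAbove_of_small)

lemma exists_lt_mk_inter_fiber {C : Set α} (p : α → ι) (hμ : ℵ₀ ≤ μ) (hι : #ι < μ)
    (hC : μ ≤ #C) (hν : ν < μ) : ∃ i, ν < #↥(C ∩ p ⁻¹' {i}) := by
  by_contra! hle
  have hcover : ⋃ i, C ∩ p ⁻¹' {i} = C := by
    rw [← inter_iUnion, ← preimage_iUnion, iUnion_of_singleton, preimage_univ, inter_univ]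
  have hlt := mk_iUnion_lt_of_forall_le hμ hι hν hle
  rw [hcover] at hlt
  exact hlt.not_ge hC

lemma sum_eq_of_forall_exists_lt {h : ι → Cardinal.{u}} (hμ : ℵ₀ ≤ μ) (hι : #ι ≤ μ)
    (hle : ∀ i, h i ≤ μ) (hunb : ∀ ν < μ, ∃ i, ν < h i) : sum h = μ := by
  refine le_antisymm ?_ (le_of_forall_lt fun ν hν => ?_)
  · calc sum h
      _ ≤ #ι * ⨆ i, h i := sum_le_mk_mul_iSup h
      _ ≤ μ * μ := mul_le_mul' hι (ciSup_le' hle)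
      _ = μ := mul_eq_self hμ
  · obtain ⟨i, hi⟩ := hunb ν hν
    exact hi.trans_le (le_sum h i)

lemma mk_sigma_fst_preimage_singleton (β : ι → Type u) (i : ι) :
    #((Sigma.fst : (Σ i, β i) → ι) ⁻¹' {i}) = #(β i) := by
  rw [← range_sigmaMk, mk_range_eq _ sigma_mk_injective]

lemma exists_map_mk_fiber_eq {h : ι → Cardinal.{u}} (hsum : sum h = #α) :
    ∃ p : α → ι, ∀ i, #(p ⁻¹' {i}) = h i := by
  obtain ⟨e⟩ : Nonempty (α ≃ Σ i, (h i).out) := Cardinal.eq.1 (by simp [hsum])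
  refine ⟨Sigma.fst ∘ e, fun i => ?_⟩
  rw [preimage_comp, mk_preimage_equiv, mk_sigma_fst_preimage_singleton, mk_out]

lemma mk_setOf_mk_Iic_le_lt [LinearOrder α] [WellFoundedLT α] {s : Set α} (hα : ℵ₀ ≤ #α)
    (hs : IsCofinal s) (hord : ord #s = Ordinal.type (α := s) (· < ·)) (hlt : #s < #α)
    (hν : ν < #α) : #{y : s | #(Iic (y : α)) ≤ ν} < #s := by
  set T : Set s := {y | #(Iic (y : α)) ≤ ν}
  have not_cofinal : ¬ IsCofinal T := by
    intro hT
    have hcover : ⋃ y : T, Iic (y : α) = Set.univ := by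
      simpa using isCofinal_iff_iUnion_Iic_eq_univ.1 (hs.trans hT)
    have hsmall := mk_iUnion_lt_of_forall_le (f := fun y : T => Iic (y : α)) hα
      ((mk_set_le T).trans_lt hlt) hν fun y => y.2
    rw [hcover, mk_univ] at hsmall
    exact hsmall.false
  obtain ⟨y, hy⟩ := not_isCofinal_iff.1 not_cofinal
  exact (mk_le_mk_of_subset hy).trans_lt (mk_Iio_lt y hord)

lemma exists_cardinals_mk_setOf_le_lt (hμ : ℵ₀ ≤ μ) (hι : #ι = μ.ord.cof) (hlt : #ι < μ) :
    ∃ h : ι → Cardinal.{u}, (∀ i, h i ≠ 0) ∧ (∀ i, h i < μ) ∧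
      ∀ ν < μ, #{i | h i ≤ ν} < #ι := by
  obtain ⟨s, hs, hord⟩ := Ordinal.exists_ord_cof_eq μ.ord.ToType
  rw [Ordinal.cof_toType, ← hι] at hord
  have hsι : #s = #ι := by simpa using congrArg Ordinal.card hord
  have hμ' : #μ.ord.ToType = μ := mk_ord_toType μ
  obtain ⟨e⟩ := Cardinal.eq.1 hsι.symm
  refine ⟨fun i => #(Iic (e i : μ.ord.ToType)), fun i => ?_, fun i => ?_, fun ν hν => ?_⟩
  · exact mk_ne_zero_iff.2 nonempty_Iic.to_subtype
  · simpa only [hμ'] using mk_Iic_lt (e i : μ.ord.ToType) (by simp) (by rwa [hμ'])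
  · rw [← hμ'] at hμ hlt hν
    rw [← hsι] at hord hlt ⊢
    have hpre := mk_preimage_equiv e {y : s | #(Iic (y : μ.ord.ToType)) ≤ ν}
    exact hpre.trans_lt (mk_setOf_mk_Iic_le_lt hμ hs hord.symm hlt hν)

end Cardinals

/-- The partition of a set `α` of singular cardinality into `cf #α` smaller nonempty pieces whose
sizes tend to `#α`, encoded by the map `p : α → ι` sending a point to the index of its piece. The
equality `#ι = cf #α` is not part of the structure. -/
structure IsSingularPartition {α ι : Type u} (p : α → ι) : Prop where
  surjective : Function.Surjective p
  mk_fiber_lt : ∀ i, #(p ⁻¹' {i}) < #α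
  mk_small_fibers_lt : ∀ ν < #α, #{i | #(p ⁻¹' {i}) ≤ ν} < #ι

lemma exists_isSingularPartition {α ι : Type u} (hα : ℵ₀ ≤ #α) (hι : #ι = (#α).ord.cof)
    (hlt : #ι < #α) : ∃ p : α → ι, IsSingularPartition p := by
  obtain ⟨h, hne, hsize, hsmall⟩ := exists_cardinals_mk_setOf_le_lt hα hι hlt
  have hunb : ∀ ν < #α, ∃ i, ν < h i := by
    intro ν hν
    by_contra! hle
    exact (hsmall ν hν).ne (by rw [eq_univ_of_forall (s := {i | h i ≤ ν}) hle, mk_univ])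
  obtain ⟨p, hp⟩ := exists_map_mk_fiber_eq
    (sum_eq_of_forall_exists_lt hα hlt.le (fun i => (hsize i).le) hunb)
  refine ⟨p, fun i => ?_, by simpa only [hp] using hsize, by simpa only [hp] using hsmall⟩
  obtain ⟨x, hx⟩ := mk_ne_zero_iff.1 ((hp i).trans_ne (hne i))
  exact ⟨x, hx⟩

namespace IsSingularPartition

variable {α ι : Type u} {p : α → ι} {ν : Cardinal.{u}} {S : Set ι} {C : Set α}

lemma exists_mem_lt_mk_fiber (hp : IsSingularPartition p) (hS : #ι ≤ #S) (hν : ν < #α) :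
    ∃ i ∈ S, ν < #(p ⁻¹' {i}) := by
  by_contra! hle
  exact ((hp.mk_small_fibers_lt ν hν).trans_le hS).not_ge (mk_le_mk_of_subset hle)

lemma mk_preimage_eq (hp : IsSingularPartition p) (hS : #ι ≤ #S) : #(p ⁻¹' S) = #α := by
  refine (mk_set_le _).antisymm (le_of_forall_lt fun ν hν => ?_)
  obtain ⟨i, hi, hlt⟩ := hp.exists_mem_lt_mk_fiber hS hν
  exact hlt.trans_le (mk_le_mk_of_subset (preimage_mono (singleton_subset_iff.2 hi)))

lemma mk_preimage_lt (hp : IsSingularPartition p) (hα : ℵ₀ ≤ #α) (hι : #ι ≤ (#α).ord.cof)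
    (hS : #S < #ι) : #(p ⁻¹' S) < #α := by
  rw [← biUnion_preimage_singleton, biUnion_eq_iUnion]
  exact mk_iUnion_lt_of_lt_cof hα (hS.trans_le hι) fun i => hp.mk_fiber_lt i

lemma mk_le_mk_range (hp : IsSingularPartition p) (hα : ℵ₀ ≤ #α) (hι : #ι ≤ (#α).ord.cof)
    {d : ι → ι} (hd : ∀ i, #(p ⁻¹' {i}) ≤ #(p ⁻¹' {d i})) : #ι ≤ #(range d) := by
  by_contra! hlt
  obtain ⟨i, -, hi⟩ :=
    hp.exists_mem_lt_mk_fiber mk_univ.ge (hp.mk_preimage_lt hα hι hlt)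
  have hsub : p ⁻¹' {d i} ⊆ p ⁻¹' range d :=
    preimage_mono (singleton_subset_iff.2 (mem_range_self i))
  exact (hi.trans_le (hd i)).not_ge (mk_le_mk_of_subset hsub)

lemma mk_le_mk_inter_preimage (hp : IsSingularPartition p) {d : ι → ι}
    (hd : ∀ i, #(p ⁻¹' {i}) ≤ #↥(C ∩ p ⁻¹' {d i})) (hS : #ι ≤ #↥(range d ∩ S)) :
    #α ≤ #↥(C ∩ p ⁻¹' S) := by
  have hdS : #ι ≤ #(d ⁻¹' S) := by
    rw [inter_comm, ← image_preimage_eq_inter_range] at hS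
    exact hS.trans mk_image_le
  refine le_of_forall_lt fun ν hν => ?_
  obtain ⟨i, hi, hlt⟩ := hp.exists_mem_lt_mk_fiber hdS hν
  have hsub : C ∩ p ⁻¹' {d i} ⊆ C ∩ p ⁻¹' S :=
    inter_subset_inter_right C (preimage_mono (singleton_subset_iff.2 hi))
  exact hlt.trans_le ((hd i).trans (mk_le_mk_of_subset hsub))

end IsSingularPartition

lemma isMadFamily_iff {α : Type u} {κ : Cardinal.{u}} {𝒜 : Set (Set α)} :
    IsMadFamily κ 𝒜 ↔
      IsADFamily κ 𝒜 ∧ ∀ D ⊆ ⋃₀ 𝒜, #D = κ → ∃ A ∈ 𝒜, κ ≤ #↥(D ∩ A) := by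
  refine and_congr_right fun ⟨hU, hcard, had⟩ => ⟨fun hmax D hD hDκ => ?_, ?_⟩
  · by_cases hDA : D ∈ 𝒜
    · exact ⟨D, hDA, by rw [inter_self, hDκ]⟩
    by_contra! hsmall
    refine hmax ⟨D, hD, hDA, ?_, ?_, ?_⟩
    · rw [sUnion_insert, union_eq_right.2 hD, hU]
    · exact forall_mem_insert.2 ⟨hDκ, hcard⟩
    · rintro A (rfl | hA) B (rfl | hB) hne
      · exact absurd rfl hne
      · exact hsmall B hB
      · exact inter_comm B A ▸ hsmall A hA
      · exact had A hA B hB hne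
  · rintro hmeet ⟨C, hCU, hC, -, hcard', had'⟩
    obtain ⟨A, hA, hle⟩ := hmeet C hCU (hcard' C (mem_insert C 𝒜))
    exact hle.not_gt (had' C (mem_insert C 𝒜) A (mem_insert_of_mem C hA)
      (ne_of_mem_of_not_mem hA hC).symm)

section Preimage

variable {α ι : Type u} {p : α → ι} {𝒜 : Set (Set ι)}

lemma IsADFamily.image_preimage (h𝒜 : IsADFamily #ι 𝒜) (hp : IsSingularPartition p)
    (hα : ℵ₀ ≤ #α) (hι : #ι ≤ (#α).ord.cof) : IsADFamily #α (preimage p '' 𝒜) := by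
  obtain ⟨hU, hcard, had⟩ := h𝒜
  refine ⟨?_, ?_, ?_⟩
  · rw [sUnion_image, ← preimage_sUnion]
    exact hp.mk_preimage_eq hU.ge
  · rintro _ ⟨A, hA, rfl⟩
    exact hp.mk_preimage_eq (hcard A hA).ge
  · rintro _ ⟨A, hA, rfl⟩ _ ⟨B, hB, rfl⟩ hne
    rw [← preimage_inter]
    exact hp.mk_preimage_lt hα hι (had A hA B hB (ne_of_apply_ne _ hne))

lemma IsMadFamily.image_preimage (h𝒜 : IsMadFamily #ι 𝒜) (hp : IsSingularPartition p)
    (hα : ℵ₀ ≤ #α) (hι : #ι ≤ (#α).ord.cof) (hlt : #ι < #α) :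
    IsMadFamily #α (preimage p '' 𝒜) := by
  rw [isMadFamily_iff] at h𝒜 ⊢
  obtain ⟨had, hmeet⟩ := h𝒜
  refine ⟨had.image_preimage hp hα hι, fun C hCU hC => ?_⟩
  choose d hd using fun i => exists_lt_mk_inter_fiber p hα hlt hC.ge (hp.mk_fiber_lt i)
  have hdU : range d ⊆ ⋃₀ 𝒜 := by
    rintro _ ⟨i, rfl⟩
    obtain ⟨x, hxC, hx⟩ := mk_ne_zero_iff.1 (hd i).ne_bot
    have hpx : p x ∈ ⋃₀ 𝒜 := by simpa using hCU hxC
    rwa [← show p x = d i from hx]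
  have hdι : #(range d) = #ι := (mk_set_le _).antisymm <|
    hp.mk_le_mk_range hα hι fun i => (hd i).le.trans (mk_le_mk_of_subset inter_subset_right)
  obtain ⟨A, hA, hdA⟩ := hmeet (range d) hdU hdι
  exact ⟨p ⁻¹' A, mem_image_of_mem _ hA, hp.mk_le_mk_inter_preimage (fun i => (hd i).le) hdA⟩

end Preimage

/-- For a singular cardinal μ, MAD(cf μ) ⊆ MAD(μ). -/
theorem stmt2 (μ : Cardinal.{u}) (hμ : ℵ₀ ≤ μ) (hsing : μ.ord.cof < μ) :
    MADSet μ.ord.cof ⊆ MADSet μ := by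
  rintro _ ⟨𝒜, hmad, hcof, rfl⟩
  rw [Ordinal.cof_ord_cof] at hcof
  have hα : ℵ₀ ≤ #μ.out := by rwa [mk_out]
  have hι : #μ.ord.cof.out = (#μ.out).ord.cof := by simp only [mk_out]
  have hlt : #μ.ord.cof.out < #μ.out := by simpa only [mk_out]
  obtain ⟨p, hp⟩ := exists_isSingularPartition hα hι hlt
  have hcard : #(preimage p '' 𝒜) = #𝒜 := mk_image_eq hp.surjective.preimage_injective
  have hmad_out : IsMadFamily #μ.ord.cof.out 𝒜 := by rwa [mk_out]
  have hmad_preimage := hmad_out.image_preimage hp hα hι.le hlt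
  rw [mk_out] at hmad_preimage
  exact ⟨preimage p '' 𝒜, hmad_preimage, hcof.trans_eq hcard.symm, hcard⟩
end

section
/- Let μ be a singular cardinal. Then for every regular cardinal λ with 𝔞_μ ≤ λ < μ, it holds that λ ∈ MAD(μ). -/
/-!
Write `κ = cf μ`, and fix a nontrivial `μ`-mad family `𝒜` with at most `lam` members. Split a set
of size `μ` into `lam` fibres of size `μ` of a rank function `r` with values in a well-order with a
greatest element. Every set `C` of size `μ` has a level: the least `δ` such that `C` has `μ` points
of rank at most `δ`. Discarding the points of rank above `δ` makes sets of different levels almost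
disjoint, so it suffices to find for each `δ` a maximal almost disjoint family of sets of level
`δ`, of size at most `#𝒜` and containing the fibre over `δ`; the union of these families over all
`δ` then has exactly `lam` members.

If some set of level `δ` is almost disjoint from the fibre over `δ`, then the number of its points
of rank at most `i` increases to `μ` as `i` increases to `δ`, since there are fewer than `μ` ranks.
Hence there is a cofinal map from `κ` to the ranks below `δ`, and the sets in question are those
almost disjoint from each member of a `κ`-sequence of blocks. A maximal family of such sets is
copied from `𝒜`: choose distinct `a j ∈ 𝒜` for `j < κ` and an injection `φ` mapping the points
which first occur in the `j`-th block into `a j \ ⋃ i < j, a i`. The copies are the preimages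
`φ ⁻¹' A` of the other members `A` of `𝒜`, as far as these have size `μ`.
-/

universe u
open Cardinal

open Set Function

variable {μ : Cardinal.{u}} {α β : Type u}

theorem aleph0_le_cof_ord (hμ : ℵ₀ ≤ μ) : ℵ₀ ≤ μ.ord.cof :=
  Ordinal.aleph0_le_cof_iff.2 (Ordinal.one_lt_cof_iff.2 (isSuccLimit_ord hμ))

/-- Almost disjointness of two sets with respect to `μ`, as in `IsADFamily`, but without a condition
on the size of the two sets. -/
def AlmostDisjoint (μ : Cardinal.{u}) (A B : Set α) : Prop :=
  #(A ∩ B : Set α) < μ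

namespace AlmostDisjoint

variable {A A' B B' C : Set α}

theorem symm (h : AlmostDisjoint μ A B) : AlmostDisjoint μ B A := by
  rwa [AlmostDisjoint, inter_comm]

theorem mono (h : AlmostDisjoint μ A' B') (hA : A ⊆ A') (hB : B ⊆ B') : AlmostDisjoint μ A B :=
  (mk_le_mk_of_subset (inter_subset_inter hA hB)).trans_lt h

theorem of_disjoint (hμ : 0 < μ) (h : Disjoint A B) : AlmostDisjoint μ A B := by
  rwa [AlmostDisjoint, h.inter_eq, mk_eq_zero]

theorem mk_lt_of_subset (h : AlmostDisjoint μ A B) (hAB : A ⊆ B) : #A < μ := by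
  rwa [AlmostDisjoint, inter_eq_left.2 hAB] at h

theorem union_right (hμ : ℵ₀ ≤ μ) (hB : AlmostDisjoint μ A B) (hC : AlmostDisjoint μ A C) :
    AlmostDisjoint μ A (B ∪ C) := by
  rw [AlmostDisjoint, inter_union_distrib_left]
  exact (mk_union_le _ _).trans_lt (add_lt_of_lt hμ hB hC)

theorem biUnion_right (hμ : ℵ₀ ≤ μ) {ι : Type u} {s : Set ι} (hs : #s < μ.ord.cof)
    {T : ι → Set α} (hT : ∀ i ∈ s, AlmostDisjoint μ A (T i)) :
    AlmostDisjoint μ A (⋃ i ∈ s, T i) := by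
  rw [AlmostDisjoint, inter_iUnion₂]
  refine (mk_biUnion_le _ s).trans_lt (mul_lt_of_lt hμ (hs.trans_le (Ordinal.cof_ord_le μ)) ?_)
  exact iSup_lt_of_lt_cof_ord hs fun i => hT i i.2

theorem preimage {φ : β → α} (hφ : Injective φ) (h : AlmostDisjoint μ A B) :
    AlmostDisjoint μ (φ ⁻¹' A) (φ ⁻¹' B) :=
  (mk_preimage_of_injective φ (A ∩ B) hφ).trans_lt h

theorem le_mk_sdiff (hμ : ℵ₀ ≤ μ) (hA : μ ≤ #A) (h : AlmostDisjoint μ A B) :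
    μ ≤ #(A \ B : Set α) := by
  by_contra! hlt
  have hadd := le_mk_sdiff_add_mk A (A ∩ B)
  rw [sdiff_self_inter] at hadd
  exact ((hA.trans hadd).trans_lt (add_lt_of_lt hμ hlt h)).false

end AlmostDisjoint

/-- `𝒜` is a maximal almost disjoint subfamily of `P`. Maximality is encoded as: every member of `P`
meets a member of `𝒜` in at least `μ` points. -/
structure IsMadIn (μ : Cardinal.{u}) (P 𝒜 : Set (Set α)) : Prop where
  subset : 𝒜 ⊆ P
  pairwise : 𝒜.Pairwise (AlmostDisjoint μ)
  exists_not_almostDisjoint : ∀ C ∈ P, ∃ A ∈ 𝒜, ¬AlmostDisjoint μ A C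

theorem IsMadFamily.isMadIn {𝒜 : Set (Set α)} (h : IsMadFamily μ 𝒜) :
    IsMadIn μ {S | S ⊆ ⋃₀ 𝒜 ∧ #S = μ} 𝒜 where
  subset A hA := ⟨subset_sUnion_of_mem hA, h.1.2.1 A hA⟩
  pairwise := h.1.2.2
  exists_not_almostDisjoint := by
    rintro C ⟨hC, hCμ⟩
    by_contra! hcon
    have hCA : C ∉ 𝒜 := fun hmem => ((hcon C hmem).mk_lt_of_subset subset_rfl).ne hCμ
    have hpair : (insert C 𝒜).Pairwise (AlmostDisjoint μ) :=
      pairwise_insert.2 ⟨h.1.2.2, fun A hA _ => ⟨(hcon A hA).symm, hcon A hA⟩⟩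
    refine h.2 ⟨C, hC, hCA, ?_, forall_mem_insert.2 ⟨hCμ, h.1.2.1⟩, hpair⟩
    rw [sUnion_insert, union_eq_self_of_subset_left hC]
    exact h.1.1

namespace IsMadIn

variable {P Q 𝒜 : Set (Set α)}

theorem isMadFamily (hα : #α = μ) (h : IsMadIn μ {S : Set α | #S = μ} 𝒜) : IsMadFamily μ 𝒜 := by
  have hunion : #(⋃₀ 𝒜) = μ := by
    obtain ⟨A, hA, -⟩ := h.exists_not_almostDisjoint univ (mk_univ.trans hα)
    exact ((mk_set_le _).trans_eq hα).antisymm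
      ((h.subset hA).ge.trans (mk_le_mk_of_subset (subset_sUnion_of_mem hA)))
  refine ⟨⟨hunion, h.subset, h.pairwise⟩, ?_⟩
  rintro ⟨C, -, hC, -, hsize, hpair⟩
  obtain ⟨A, hA, hAC⟩ := h.exists_not_almostDisjoint C (hsize C (mem_insert C 𝒜))
  exact hAC (hpair A (mem_insert_of_mem C hA) C (mem_insert C 𝒜) (ne_of_mem_of_not_mem hA hC))

theorem exists_superset (hP : ∀ S ∈ P, μ ≤ #S) {𝓑 : Set (Set α)} (h𝓑 : 𝓑 ⊆ P)
    (hpair : 𝓑.Pairwise (AlmostDisjoint μ)) : ∃ 𝒜, 𝓑 ⊆ 𝒜 ∧ IsMadIn μ P 𝒜 := by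
  obtain ⟨𝒜, hsub, hmax⟩ :=
    zorn_subset_nonempty {𝒜 : Set (Set α) | 𝒜 ⊆ P ∧ 𝒜.Pairwise (AlmostDisjoint μ)}
      (fun c hc hchain _ => ⟨⋃₀ c, ⟨sUnion_subset fun s hs => (hc hs).1,
        (pairwise_sUnion hchain.directedOn).2 fun s hs => (hc hs).2⟩,
        fun s hs => subset_sUnion_of_mem hs⟩) 𝓑 ⟨h𝓑, hpair⟩
  refine ⟨𝒜, hsub, hmax.prop.1, hmax.prop.2, fun C hC => ?_⟩
  by_contra! hcon
  have hins : insert C 𝒜 ⊆ P ∧ (insert C 𝒜).Pairwise (AlmostDisjoint μ) :=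
    ⟨insert_subset hC hmax.prop.1,
      pairwise_insert.2 ⟨hmax.prop.2, fun A hA _ => ⟨(hcon A hA).symm, hcon A hA⟩⟩⟩
  have hmem : C ∈ 𝒜 := hmax.le_of_ge hins (subset_insert C 𝒜) (mem_insert C 𝒜)
  exact ((hcon C hmem).mk_lt_of_subset subset_rfl).not_ge (hP C hC)

theorem insert {X : Set α} (hX : X ∈ P) (h : IsMadIn μ {S ∈ P | AlmostDisjoint μ S X} 𝒜) :
    IsMadIn μ P (insert X 𝒜) where
  subset := insert_subset hX fun _ hA => (h.subset hA).1
  pairwise := pairwise_insert.2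
    ⟨h.pairwise, fun _ hA _ => ⟨(h.subset hA).2.symm, (h.subset hA).2⟩⟩
  exists_not_almostDisjoint C hC := by
    by_cases hCX : AlmostDisjoint μ C X
    · obtain ⟨A, hA, hAC⟩ := h.exists_not_almostDisjoint C ⟨hC, hCX⟩
      exact ⟨A, mem_insert_of_mem X hA, hAC⟩
    · exact ⟨X, mem_insert X 𝒜, fun hXC => hCX hXC.symm⟩

theorem iUnion {ι : Type*} {R 𝓑 : ι → Set (Set α)} (h : ∀ i, IsMadIn μ (R i) (𝓑 i))
    (hRQ : ∀ i, R i ⊆ Q)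
    (hR : Pairwise fun i j => ∀ S ∈ R i, ∀ T ∈ R j, AlmostDisjoint μ S T)
    (hQ : ∀ C ∈ Q, ∃ i, ∃ S ∈ R i, S ⊆ C) : IsMadIn μ Q (⋃ i, 𝓑 i) where
  subset := iUnion_subset fun i => (h i).subset.trans (hRQ i)
  pairwise := by
    intro S hS T hT hST
    obtain ⟨i, hSi⟩ := mem_iUnion.1 hS
    obtain ⟨j, hTj⟩ := mem_iUnion.1 hT
    by_cases hij : i = j
    · subst hij
      exact (h i).pairwise hSi hTj hST
    · exact hR hij S ((h i).subset hSi) T ((h j).subset hTj)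
  exists_not_almostDisjoint C hC := by
    obtain ⟨i, S, hS, hSC⟩ := hQ C hC
    obtain ⟨A, hA, hAS⟩ := (h i).exists_not_almostDisjoint S hS
    exact ⟨A, mem_iUnion_of_mem i hA, fun hAC => hAS (hAC.mono subset_rfl hSC)⟩

end IsMadIn

theorem exists_forall_mk_fibre_eq (hμ : ℵ₀ ≤ μ) (hα : #α = μ) (I : Type u) [Nonempty I]
    (hI : #I ≤ μ) : ∃ r : α → I, ∀ i, #(r ⁻¹' {i}) = μ := by
  have hprod : #α = #(I × α) := by
    rw [mk_prod, lift_id, lift_id, hα, mul_eq_right hμ hI (mk_ne_zero I)]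
  obtain ⟨τ⟩ := Cardinal.eq.1 hprod
  refine ⟨fun x => (τ x).1, fun i => ((mk_set_le _).trans_eq hα).antisymm (hα.ge.trans ?_)⟩
  refine mk_le_of_injective (f := fun x : α => ⟨τ.symm (i, x), by simp⟩) fun x y hxy => ?_
  simpa using hxy

theorem injective_fibre_of_mk_eq (hμ : 0 < μ) {I : Type u} {r : α → I}
    (hr : ∀ i, #(r ⁻¹' {i}) = μ) : Injective fun i => r ⁻¹' {i} := by
  have hsurj : Surjective r := fun i => by
    obtain ⟨x, hx⟩ := mk_set_ne_zero_iff.1 ((hr i).trans_ne hμ.ne')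
    exact ⟨x, hx⟩
  exact (preimage_injective.2 hsurj).comp singleton_injective

theorem MADSet_nonempty (hμ : ℵ₀ ≤ μ) : (MADSet μ).Nonempty := by
  have hμ₀ : 0 < μ := aleph0_pos.trans_le hμ
  have : Nonempty μ.ord.cof.out := by
    rw [← mk_ne_zero_iff, mk_out]
    exact (aleph0_pos.trans_le (aleph0_le_cof_ord hμ)).ne'
  obtain ⟨r, hr⟩ := exists_forall_mk_fibre_eq hμ (mk_out μ) μ.ord.cof.out
    ((mk_out _).trans_le (Ordinal.cof_ord_le μ))
  have hpair : (range fun i => r ⁻¹' {i}).Pairwise (AlmostDisjoint μ) :=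
    ((pairwise_disjoint_fiber r).range_pairwise).imp fun _ _ => AlmostDisjoint.of_disjoint hμ₀
  obtain ⟨𝒜, hsub, h𝒜⟩ := IsMadIn.exists_superset (P := {S | #S = μ}) (fun _ hS => hS.ge)
    (range_subset_iff.2 hr) hpair
  refine ⟨#𝒜, 𝒜, h𝒜.isMadFamily (mk_out μ), ?_, rfl⟩
  rw [← mk_out μ.ord.cof, ← mk_range_eq _ (injective_fibre_of_mk_eq hμ₀ hr)]
  exact mk_le_mk_of_subset hsub

/-- The sets of size `μ` which are almost disjoint from all blocks `E j`; with blocks indexed by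
`cf μ`, a nontrivial `μ`-mad family can be copied to a maximal almost disjoint family of such
sets. -/
def orthogonalSets {K : Type*} (μ : Cardinal.{u}) (E : K → Set α) : Set (Set α) :=
  {S | #S = μ ∧ ∀ j, AlmostDisjoint μ S (E j)}

section Transfer

variable {K : Type u} [LinearOrder K]

theorem exists_injective_mem_sdiff (hμ : ℵ₀ ≤ μ) (hK : ∀ j : K, #(Iic j) < μ.ord.cof)
    {a : K → Set α} (ha : ∀ j, μ ≤ #(a j)) (had : Pairwise (AlmostDisjoint μ on a))
    (hβ : #β ≤ μ) (p : β → K) :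
    ∃ φ : β → α, Injective φ ∧ ∀ x, φ x ∈ a (p x) \ ⋃ i ∈ Iio (p x), a i := by
  have hsize (j : K) : μ ≤ #(a j \ ⋃ i ∈ Iio j, a i : Set α) :=
    (AlmostDisjoint.biUnion_right hμ ((mk_le_mk_of_subset Iio_subset_Iic_self).trans_lt (hK j))
      fun i hi => had (ne_of_gt hi)).le_mk_sdiff hμ (ha j)
  have hdisj : Pairwise (Disjoint on fun j => a j \ ⋃ i ∈ Iio j, a i) :=
    (pairwise_disjoint_on _).2 fun i j hij => disjoint_left.2 fun x hx hx' =>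
      hx'.2 (mem_biUnion (mem_Iio.2 hij) hx.1)
  have hemb (j : K) : Nonempty (β ↪ (a j \ ⋃ i ∈ Iio j, a i : Set α)) := hβ.trans (hsize j)
  have e (j : K) := (hemb j).some
  refine ⟨fun x => e (p x) x, fun x y (hxy : (e (p x) x : α) = e (p y) y) => ?_,
    fun x => (e (p x) x).2⟩
  have hp : p x = p y := hdisj.eq <| not_disjoint_iff.2
    ⟨e (p x) x, (e (p x) x).2, by rw [hxy]; exact (e (p y) y).2⟩
  rw [hp] at hxy
  exact (e (p y)).injective (Subtype.ext hxy)

theorem IsMadFamily.exists_isMadIn_orthogonalSets_preimage_Iic (hμ : ℵ₀ ≤ μ)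
    (hK : ∀ j : K, #(Iic j) < μ.ord.cof) {𝒜 : Set (Set α)} (h𝒜 : IsMadFamily μ 𝒜) (a : K ↪ 𝒜)
    (hβ : #β ≤ μ) (p : β → K) :
    ∃ 𝓑, IsMadIn μ (orthogonalSets μ fun j => p ⁻¹' Iic j) 𝓑 ∧ #𝓑 ≤ #𝒜 := by
  have hmad := h𝒜.isMadIn
  obtain ⟨φ, hφ, hφa⟩ := exists_injective_mem_sdiff hμ hK (a := fun j => (a j : Set α))
    (fun j => (hmad.subset (a j).2).2.ge)
    (fun i j hij => hmad.pairwise (a i).2 (a j).2 (Subtype.coe_injective.ne (a.injective.ne hij)))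
    hβ p
  have hpre (j : K) : φ ⁻¹' a j ⊆ p ⁻¹' Iic j := fun x hx =>
    not_lt.1 fun hlt => (hφa x).2 (mem_biUnion (mem_Iio.2 hlt) hx)
  refine ⟨orthogonalSets μ (fun j => p ⁻¹' Iic j) ∩ preimage φ '' 𝒜, ⟨inter_subset_left, ?_, ?_⟩,
    (mk_le_mk_of_subset inter_subset_right).trans mk_image_le⟩
  · rintro _ ⟨-, A, hA, rfl⟩ _ ⟨-, B, hB, rfl⟩ hAB
    exact (hmad.pairwise hA hB fun h => hAB (h ▸ rfl)).preimage hφ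
  · rintro C ⟨hCμ, hC⟩
    obtain ⟨A, hA, hAC⟩ := hmad.exists_not_almostDisjoint (φ '' C)
      ⟨image_subset_iff.2 fun x _ => ⟨a (p x), (a (p x)).2, (hφa x).1⟩,
        (mk_image_eq hφ).trans hCμ⟩
    rw [AlmostDisjoint, ← image_preimage_inter, mk_image_eq hφ] at hAC
    have hAa (j : K) : A ≠ a j := by
      rintro rfl
      exact hAC ((hC j).symm.mono (hpre j) subset_rfl)
    refine ⟨φ ⁻¹' A, ⟨⟨?_, fun j => ?_⟩, mem_image_of_mem _ hA⟩, hAC⟩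
    · exact ((mk_set_le _).trans hβ).antisymm
        ((not_lt.1 hAC).trans (mk_le_mk_of_subset inter_subset_left))
    · refine (AlmostDisjoint.biUnion_right hμ (hK j) fun i _ =>
        (hmad.pairwise hA (a i).2 (hAa i)).preimage hφ).mono subset_rfl ?_
      exact fun x hx => mem_biUnion hx (hφa x).1

theorem IsMadFamily.exists_isMadIn_orthogonalSets [WellFoundedLT K] (hμ : ℵ₀ ≤ μ)
    (hK : ∀ j : K, #(Iic j) < μ.ord.cof) {𝒜 : Set (Set α)} (h𝒜 : IsMadFamily μ 𝒜) (a : K ↪ 𝒜)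
    (hβ : #β ≤ μ) {E : K → Set β} (hE : ∀ x, ∃ j, x ∈ E j) :
    ∃ 𝓑, IsMadIn μ (orthogonalSets μ E) 𝓑 ∧ #𝓑 ≤ #𝒜 := by
  choose p hpE hpmin using fun x =>
    WellFounded.has_min (wellFounded_lt (α := K)) {j | x ∈ E j} (hE x)
  have hEp : orthogonalSets μ E = orthogonalSets μ fun j => p ⁻¹' Iic j := by
    ext S
    refine and_congr_right fun _ => ⟨fun hS j => ?_, fun hS j => ?_⟩
    · exact (AlmostDisjoint.biUnion_right hμ (hK j) fun i _ => hS i).mono subset_rfl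
        fun x hx => mem_biUnion hx (hpE x)
    · exact (hS j).mono subset_rfl fun x hx => not_lt.1 (hpmin x j hx)
  rw [hEp]
  exact h𝒜.exists_isMadIn_orthogonalSets_preimage_Iic hμ hK a hβ p

end Transfer

theorem exists_cofinal_of_monotone {J : Type*} [LinearOrder J] {g : J → Cardinal.{u}}
    (hg : Monotone g) (hlt : ∀ i, g i < μ) (hunb : ∀ θ < μ, ∃ i, θ < g i) :
    ∃ f : μ.ord.cof.ord.ToType → J, ∀ i, ∃ j, i ≤ f j := by
  obtain ⟨s, hs, hcard⟩ := Order.exists_cof_eq μ.ord.ToType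
  obtain ⟨τ⟩ : Nonempty (μ.ord.cof.ord.ToType ≃ s) := by
    rw [← Cardinal.eq, hcard, Ordinal.cof_toType, mk_ord_toType]
  have hseg (t : μ.ord.ToType) : #(Iio t) < μ := by simpa using mk_Iio_lt t (by simp)
  choose f hf using fun j => hunb _ (hseg (τ j))
  refine ⟨f, fun i => ?_⟩
  obtain ⟨t, ht⟩ : ∃ t : μ.ord.ToType, #(Iio t) = g i := by
    have h : (g i).ord < Ordinal.type (α := μ.ord.ToType) (· < ·) := by simpa using hlt i
    refine ⟨Ordinal.enum (α := μ.ord.ToType) (· < ·) ⟨(g i).ord, h⟩, ?_⟩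
    exact (congrArg Ordinal.card (Ordinal.typein_enum _ h)).trans (card_ord _)
  obtain ⟨t', ht's, htt'⟩ := hs t
  obtain ⟨j, hj⟩ := τ.surjective ⟨t', ht's⟩
  refine ⟨j, (hg.reflect_lt ?_).le⟩
  calc g i = #(Iio t) := ht.symm
    _ ≤ #(Iio t') := mk_le_mk_of_subset (Iio_subset_Iio htt')
    _ < g (f j) := by simpa only [hj] using hf j

section Level

variable {I : Type u} [LinearOrder I] {r : α → I} {δ : I}

/-- The sets of level `δ` with respect to the rank function `r`: sets of size `μ`, almost all of
whose points have rank at most `δ`, and such that `δ` is least with `μ` points of rank at most `δ`.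
Exceptional points of rank above `δ` are allowed, so that the sets of level `δ` which are almost
disjoint from the fibre over `δ` form a family of `orthogonalSets`. -/
def levelSets (μ : Cardinal.{u}) (r : α → I) (δ : I) : Set (Set α) :=
  {S | #S = μ ∧ AlmostDisjoint μ S (r ⁻¹' Ioi δ) ∧ ∀ i < δ, AlmostDisjoint μ S (r ⁻¹' Iic i)}

theorem fibre_mem_levelSets (hμ : 0 < μ) (hδ : #(r ⁻¹' {δ}) = μ) :
    r ⁻¹' {δ} ∈ levelSets μ r δ :=
  ⟨hδ, .of_disjoint hμ (Disjoint.preimage r (by simp)),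
    fun i hi => .of_disjoint hμ (Disjoint.preimage r (by simpa using hi))⟩

theorem almostDisjoint_of_mem_levelSets (hμ : ℵ₀ ≤ μ) {δ' : I} (hδ : δ ≠ δ') {S T : Set α}
    (hS : S ∈ levelSets μ r δ) (hT : T ∈ levelSets μ r δ') : AlmostDisjoint μ S T := by
  wlog hlt : δ < δ' generalizing δ δ' S T
  · exact (this hδ.symm hT hS (hδ.lt_or_gt.resolve_left hlt)).symm
  have hcover : S ∩ T ⊆ (S ∩ T) ∩ (r ⁻¹' Ioi δ ∪ r ⁻¹' Iic δ) := fun x hx =>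
    ⟨hx, lt_or_ge δ (r x)⟩
  refine (mk_le_mk_of_subset hcover).trans_lt (AlmostDisjoint.union_right hμ ?_ ?_)
  · exact hS.2.1.mono inter_subset_left subset_rfl
  · exact (hT.2.2 δ hlt).mono inter_subset_right subset_rfl

theorem exists_inter_mem_levelSets [WellFoundedLT I] [OrderTop I] (hμ : 0 < μ) (r : α → I)
    {C : Set α} (hC : #C = μ) : ∃ δ, C ∩ r ⁻¹' Iic δ ∈ levelSets μ r δ := by
  have hne : {δ | ¬AlmostDisjoint μ C (r ⁻¹' Iic δ)}.Nonempty :=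
    ⟨⊤, fun h => (h.mk_lt_of_subset fun _ _ => le_top).ne hC⟩
  obtain ⟨δ, hδ, hmin⟩ := WellFounded.has_min (wellFounded_lt (α := I)) _ hne
  refine ⟨δ, ?_, .of_disjoint hμ ?_, fun i hi => ?_⟩
  · exact ((mk_le_mk_of_subset inter_subset_left).trans_eq hC).antisymm (not_lt.1 hδ)
  · exact (Disjoint.preimage r (Iic_disjoint_Ioi le_rfl)).mono_left inter_subset_right
  · exact (not_not.1 fun h => hmin i h hi).mono inter_subset_left subset_rfl

theorem exists_cofinal_of_mem_levelSets (hμ : ℵ₀ ≤ μ) (hI : #I < μ) {S : Set α}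
    (hS : S ∈ levelSets μ r δ) (hSδ : AlmostDisjoint μ S (r ⁻¹' {δ})) :
    ∃ f : μ.ord.cof.ord.ToType → Iio δ, ∀ i, ∃ j, i ≤ f j := by
  refine exists_cofinal_of_monotone (g := fun i : Iio δ => #(S ∩ r ⁻¹' Iic i.1 : Set α))
    (fun i i' hii' => mk_le_mk_of_subset (inter_subset_inter_right S (preimage_mono
      (Iic_subset_Iic.2 hii')))) (fun i => hS.2.2 i i.2) fun θ hθ => ?_
  by_contra! hcon
  have hbelow : AlmostDisjoint μ S (⋃ i : Iio δ, r ⁻¹' Iic i.1) := by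
    rw [AlmostDisjoint, inter_iUnion]
    exact (mk_iUnion_le _).trans_lt (mul_lt_of_lt hμ ((mk_set_le _).trans_lt hI)
      ((ciSup_le' hcon).trans_lt hθ))
  refine (((hbelow.union_right hμ hSδ).union_right hμ hS.2.1).mk_lt_of_subset fun x _ => ?_).ne hS.1
  rcases lt_trichotomy (r x) δ with hx | hx | hx
  · exact .inl (.inl (mem_iUnion.2 ⟨⟨r x, hx⟩, le_rfl⟩))
  · exact .inl (.inr hx)
  · exact .inr hx

theorem levelSets_sep_eq_orthogonalSets (hμ : ℵ₀ ≤ μ) {K : Type*} [Nonempty K] {f : K → Iio δ}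
    (hf : ∀ i, ∃ j, i ≤ f j) :
    {S ∈ levelSets μ r δ | AlmostDisjoint μ S (r ⁻¹' {δ})} =
      orthogonalSets μ fun j => r ⁻¹' Iic (f j) ∪ r ⁻¹' Ici δ := by
  ext S
  constructor
  · rintro ⟨⟨hSμ, habove, hbelow⟩, hδ⟩
    refine ⟨hSμ, fun j => (hbelow _ (f j).2).union_right hμ ?_⟩
    rw [← Ioi_insert, insert_eq, preimage_union]
    exact hδ.union_right hμ habove
  · rintro ⟨hSμ, hS⟩
    have habove : AlmostDisjoint μ S (r ⁻¹' Ici δ) :=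
      (hS (Classical.arbitrary K)).mono subset_rfl subset_union_right
    refine ⟨⟨hSμ, habove.mono subset_rfl (preimage_mono Ioi_subset_Ici_self), fun i hi => ?_⟩,
      habove.mono subset_rfl (preimage_mono (by simp))⟩
    obtain ⟨j, hj⟩ := hf ⟨i, hi⟩
    exact (hS j).mono subset_rfl
      ((preimage_mono (f := r) (Iic_subset_Iic.2 hj)).trans subset_union_left)

theorem IsMadFamily.exists_isMadIn_levelSets_sep (hμ : ℵ₀ ≤ μ) {𝒜 : Set (Set α)}
    (h𝒜 : IsMadFamily μ 𝒜) (hcof : μ.ord.cof ≤ #𝒜) (hβ : #β ≤ μ) (hI : #I < μ) (r : β → I)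
    (δ : I) :
    ∃ 𝓑, IsMadIn μ {S ∈ levelSets μ r δ | AlmostDisjoint μ S (r ⁻¹' {δ})} 𝓑 ∧ #𝓑 ≤ #𝒜 := by
  by_cases h : ∃ f : μ.ord.cof.ord.ToType → Iio δ, ∀ i, ∃ j, i ≤ f j
  · obtain ⟨f, hf⟩ := h
    have hκ : ℵ₀ ≤ μ.ord.cof := aleph0_le_cof_ord hμ
    have hK (j : μ.ord.cof.ord.ToType) : #(Iic j) < μ.ord.cof := by
      simpa using mk_Iic_lt j (by simp) (by simpa using hκ)
    have : Nonempty μ.ord.cof.ord.ToType := by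
      rw [← mk_ne_zero_iff, mk_ord_toType]
      exact (aleph0_pos.trans_le hκ).ne'
    obtain ⟨a⟩ : Nonempty (μ.ord.cof.ord.ToType ↪ 𝒜) := (mk_ord_toType _).trans_le hcof
    rw [levelSets_sep_eq_orthogonalSets hμ hf]
    refine h𝒜.exists_isMadIn_orthogonalSets hμ hK a hβ fun x => ?_
    rcases lt_or_ge (r x) δ with hx | hx
    · exact (hf ⟨r x, hx⟩).imp fun j hj => .inl hj
    · exact ⟨Classical.arbitrary _, .inr hx⟩
  · refine ⟨∅, ⟨empty_subset _, pairwise_empty _, fun S hS => ?_⟩, by simp⟩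
    exact absurd (exists_cofinal_of_mem_levelSets hμ hI hS.1 hS.2) h

theorem IsMadFamily.exists_isMadIn_levelSets (hμ : ℵ₀ ≤ μ) {𝒜 : Set (Set α)}
    (h𝒜 : IsMadFamily μ 𝒜) (hcof : μ.ord.cof ≤ #𝒜) (hβ : #β ≤ μ) (hI : #I < μ) {r : β → I}
    {δ : I} (hδ : #(r ⁻¹' {δ}) = μ) :
    ∃ 𝓑, IsMadIn μ (levelSets μ r δ) 𝓑 ∧ r ⁻¹' {δ} ∈ 𝓑 ∧ #𝓑 ≤ #𝒜 := by
  obtain ⟨𝓑, h𝓑, hcard⟩ := h𝒜.exists_isMadIn_levelSets_sep hμ hcof hβ hI r δ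
  refine ⟨insert (r ⁻¹' {δ}) 𝓑, h𝓑.insert (fibre_mem_levelSets (aleph0_pos.trans_le hμ) hδ),
    mem_insert _ _, mk_insert_le.trans ?_⟩
  have h𝒜₀ : ℵ₀ ≤ #𝒜 := (aleph0_le_cof_ord hμ).trans hcof
  exact add_le_of_le h𝒜₀ hcard (one_le_aleph0.trans h𝒜₀)

end Level

theorem IsMadFamily.exists_isMadFamily_mk_eq (hμ : ℵ₀ ≤ μ) {𝒜 : Set (Set α)}
    (h𝒜 : IsMadFamily μ 𝒜) (hcof : μ.ord.cof ≤ #𝒜) (hβ : #β = μ) {lam : Cardinal.{u}}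
    (hle : #𝒜 ≤ lam) (hlt : lam < μ) : ∃ 𝓑 : Set (Set β), IsMadFamily μ 𝓑 ∧ #𝓑 = lam := by
  have hμ₀ : 0 < μ := aleph0_pos.trans_le hμ
  have hlam : ℵ₀ ≤ lam := (aleph0_le_cof_ord hμ).trans (hcof.trans hle)
  let I := WithTop lam.ord.ToType
  have hI : #I = lam := by
    rw [show #I = #lam.ord.ToType + 1 from mk_option, mk_ord_toType, add_one_eq hlam]
  obtain ⟨r, hr⟩ := exists_forall_mk_fibre_eq hμ hβ I (hI.trans_le hlt.le)
  choose 𝓑 h𝓑 hmem hcard using fun δ =>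
    h𝒜.exists_isMadIn_levelSets hμ hcof hβ.le (hI.trans_lt hlt) (hr δ)
  have hmad : IsMadIn μ {S : Set β | #S = μ} (⋃ δ, 𝓑 δ) :=
    IsMadIn.iUnion h𝓑 (fun _ _ hS => hS.1)
      (fun _ _ hδ _ hS _ hT => almostDisjoint_of_mem_levelSets hμ hδ hS hT)
      fun C hC => (exists_inter_mem_levelSets hμ₀ r hC).imp fun _ h => ⟨_, h, inter_subset_left⟩
  refine ⟨⋃ δ, 𝓑 δ, hmad.isMadFamily hβ, le_antisymm ?_ ?_⟩
  · calc #(⋃ δ, 𝓑 δ) ≤ #I * ⨆ δ, #(𝓑 δ) := mk_iUnion_le 𝓑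
      _ ≤ lam * lam := mul_le_mul' hI.le (ciSup_le' fun δ => (hcard δ).trans hle)
      _ = lam := mul_eq_self hlam
  · rw [← hI, ← mk_range_eq _ (injective_fibre_of_mk_eq hμ₀ hr)]
    exact mk_le_mk_of_subset (range_subset_iff.2 fun δ => mem_iUnion_of_mem δ (hmem δ))

theorem stmt12_general (hμ : ℵ₀ ≤ μ) {lam : Cardinal.{u}} (h1 : sInf (MADSet μ) ≤ lam)
    (h2 : lam < μ) : lam ∈ MADSet μ := by
  obtain ⟨𝒜, h𝒜, hcof, hcard⟩ := csInf_mem (MADSet_nonempty hμ)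
  rw [← hcard] at h1
  obtain ⟨𝓑, h𝓑, rfl⟩ := h𝒜.exists_isMadFamily_mk_eq hμ hcof (mk_out μ) h1 h2
  exact ⟨𝓑, h𝓑, hcof.trans h1, rfl⟩

/-- For a singular μ and every regular lam with 𝔞_μ ≤ lam < μ, lam ∈ MAD(μ). -/
theorem stmt12 (μ : Cardinal.{u}) (hμ : ℵ₀ ≤ μ) (hsing : μ.ord.cof < μ)
    (lam : Cardinal.{u}) (hreg : lam.IsRegular) (h1 : sInf (MADSet μ) ≤ lam)
    (h2 : lam < μ) : lam ∈ MADSet μ :=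
  stmt12_general hμ h1 h2
end
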